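/- arXiv:1905.10299 — 2 statements merged into one kernel-verified Lean document; each statement's English description precedes it below -/
import Mathlib

section
/- (Composite bound (13) on the exact second-order remainder for the treatment-specific mean.) Let μ₀ be a probability measure on a measurable space 𝒲, let G₀, G : 𝒲 → (0,1) and Q̄₀, Q̄ : {0,1} × 𝒲 → (0,1) be measurable with G(w) ≥ δ and G₀(w) ≥ δ for all w, for some δ ∈ (0,1). Define d_G := ∫ kl(G₀(w), G(w)) dμ₀(w) and d_Q := Σ_{a∈{0,1}} ∫ G₀(w)^a (1−G₀(w))^{1−a} · kl(Q̄₀(a,w), Q̄(a,w)) dμ₀(w), where kl(q₀,q) := q₀ log(q₀/q) + (1−q₀) log((1−q₀)/(1−q)). Then | ∫ ((G(w) − G₀(w))/G(w)) (Q̄(1,w) − Q̄₀(1,w)) dμ₀(w) | ≤ 4 δ^{−3/2} · d_Q^{1/2} · d_G^{1/2}. -/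
open MeasureTheory

/-- Bernoulli Kullback–Leibler divergence
`kl(q₀,q) = q₀ log(q₀/q) + (1−q₀) log((1−q₀)/(1−q))`. -/
noncomputable def bernKL (q₀ q : ℝ) : ℝ :=
  q₀ * Real.log (q₀ / q) + (1 - q₀) * Real.log ((1 - q₀) / (1 - q))

/-!
The Bernoulli Kullback–Leibler divergence dominates the squared Hellinger distance, which in turn
dominates `(p - q)² / 4`. Cauchy–Schwarz splits the remainder into the `L²` norms of
`(G - G₀) / G` and `Q̄(1, ·) - Q̄₀(1, ·)`. The first costs a factor `δ⁻¹` for the division by `G`,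
the second a factor `δ^(-1/2)` for inserting the treatment probability `G₀` that weights the
treated arm in `d_Q`.
-/

section BernoulliDivergence

variable {p q : ℝ}

/-- The squared Hellinger distance between the Bernoulli distributions with parameters `p` and `q`,
without the factor `1 / 2` of some authors; it mediates between `bernKL p q` and `(p - q) ^ 2`. -/
noncomputable def bernHellingerSq (p q : ℝ) : ℝ :=
  (√p - √q) ^ 2 + (√(1 - p) - √(1 - q)) ^ 2

lemma two_mul_sub_sqrt_mul_sqrt_le_mul_log_div (hp : 0 ≤ p) (hq : 0 < q) :
    2 * (p - √p * √q) ≤ p * Real.log (p / q) := by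
  obtain rfl | hp := hp.eq_or_lt
  · simp
  have log_lower : 1 - √q / √p ≤ Real.log (p / q) / 2 := by
    rw [← Real.log_sqrt (by positivity), Real.sqrt_div hp.le, ← inv_div √p √q]
    exact Real.one_sub_inv_le_log_of_pos (by positivity)
  calc 2 * (p - √p * √q) = 2 * p * (1 - √q / √p) := by
        rw [mul_assoc, mul_one_sub, mul_div_left_comm, Real.div_sqrt, mul_comm √q]
    _ ≤ 2 * p * (Real.log (p / q) / 2) := by gcongr
    _ = p * Real.log (p / q) := by ring

lemma bernHellingerSq_le_bernKL (hp : p ∈ Set.Icc 0 1) (hq : q ∈ Set.Ioo 0 1) :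
    bernHellingerSq p q ≤ bernKL p q := by
  have hp' : 0 ≤ 1 - p := sub_nonneg.2 hp.2
  have hq' : 0 < 1 - q := sub_pos.2 hq.2
  calc bernHellingerSq p q
      = 2 * (p - √p * √q) + 2 * ((1 - p) - √(1 - p) * √(1 - q)) := by
        rw [bernHellingerSq, sub_sq, sub_sq, Real.sq_sqrt hp.1, Real.sq_sqrt hq.1.le,
          Real.sq_sqrt hp', Real.sq_sqrt hq'.le]
        ring
    _ ≤ bernKL p q := add_le_add (two_mul_sub_sqrt_mul_sqrt_le_mul_log_div hp.1 hq.1)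
        (two_mul_sub_sqrt_mul_sqrt_le_mul_log_div hp' hq')

lemma sq_sub_le_four_mul_bernHellingerSq (hp : p ∈ Set.Icc 0 1) (hq : q ∈ Set.Icc 0 1) :
    (p - q) ^ 2 ≤ 4 * bernHellingerSq p q := by
  have sum_le : √p + √q ≤ 2 := by
    linarith [Real.sqrt_le_one.2 hp.2, Real.sqrt_le_one.2 hq.2]
  calc (p - q) ^ 2 = (√p + √q) ^ 2 * (√p - √q) ^ 2 := by
        rw [← mul_pow, ← sq_sub_sq, Real.sq_sqrt hp.1, Real.sq_sqrt hq.1]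
    _ ≤ 2 ^ 2 * (√p - √q) ^ 2 := by gcongr
    _ ≤ 4 * bernHellingerSq p q := by
        rw [bernHellingerSq]
        linarith [sq_nonneg (√(1 - p) - √(1 - q))]

lemma bernKL_nonneg (hp : p ∈ Set.Icc 0 1) (hq : q ∈ Set.Ioo 0 1) : 0 ≤ bernKL p q :=
  (add_nonneg (sq_nonneg _) (sq_nonneg _)).trans (bernHellingerSq_le_bernKL hp hq)

lemma sq_sub_le_four_mul_bernKL (hp : p ∈ Set.Icc 0 1) (hq : q ∈ Set.Ioo 0 1) :
    (p - q) ^ 2 ≤ 4 * bernKL p q :=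
  (sq_sub_le_four_mul_bernHellingerSq hp (Set.Ioo_subset_Icc_self hq)).trans <|
    mul_le_mul_of_nonneg_left (bernHellingerSq_le_bernKL hp hq) (by norm_num)

lemma sq_sub_div_self_le_mul_bernKL {δ : ℝ} (hδ : 0 < δ) (hp : p ∈ Set.Icc 0 1)
    (hq : q ∈ Set.Ico δ 1) : ((q - p) / q) ^ 2 ≤ 4 / δ ^ 2 * bernKL p q :=
  have hq' : q ∈ Set.Ioo 0 1 := ⟨hδ.trans_le hq.1, hq.2⟩
  calc ((q - p) / q) ^ 2 = (p - q) ^ 2 / q ^ 2 := by rw [div_pow, sub_sq_comm]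
    _ ≤ 4 * bernKL p q / δ ^ 2 :=
        div_le_div₀ (mul_nonneg (by norm_num) (bernKL_nonneg hp hq'))
          (sq_sub_le_four_mul_bernKL hp hq') (by positivity) (pow_le_pow_left₀ hδ.le hq.1 2)
    _ = 4 / δ ^ 2 * bernKL p q := by ring

lemma sq_sub_le_mul_weight_mul_bernKL {π δ : ℝ} (hδ : 0 < δ) (hπ : δ ≤ π)
    (hp : p ∈ Set.Icc 0 1) (hq : q ∈ Set.Ioo 0 1) :
    (q - p) ^ 2 ≤ 4 / δ * (π * bernKL p q) :=
  have kl_nonneg : 0 ≤ bernKL p q := bernKL_nonneg hp hq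
  calc (q - p) ^ 2 ≤ 4 * bernKL p q := sub_sq_comm p q ▸ sq_sub_le_four_mul_bernKL hp hq
    _ = 4 / δ * (δ * bernKL p q) := by field_simp
    _ ≤ 4 / δ * (π * bernKL p q) := by gcongr

end BernoulliDivergence

section Integration

variable {α : Type*} [MeasurableSpace α] {μ : Measure α} {f g u v : α → ℝ}

lemma memLp_two_of_sq_le (hf : AEStronglyMeasurable f μ) (hu : Integrable u μ)
    (hfu : ∀ᵐ x ∂μ, f x ^ 2 ≤ u x) : MemLp f 2 μ := by
  refine (memLp_two_iff_integrable_sq hf).2 (hu.mono' (hf.pow 2) ?_)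
  simpa only [Real.norm_eq_abs, abs_sq] using hfu

lemma abs_integral_mul_le_sqrt_integral_sq (hf : MemLp f 2 μ) (hg : MemLp g 2 μ) :
    |∫ x, f x * g x ∂μ| ≤ √(∫ x, f x ^ 2 ∂μ) * √(∫ x, g x ^ 2 ∂μ) :=
  calc |∫ x, f x * g x ∂μ| ≤ ∫ x, |f x| * |g x| ∂μ := by
        simpa only [norm_mul, Real.norm_eq_abs] using
          norm_integral_le_integral_norm (fun x => f x * g x)
    _ ≤ √(∫ x, f x ^ 2 ∂μ) * √(∫ x, g x ^ 2 ∂μ) := by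
        have holder := integral_mul_le_Lp_mul_Lq_of_nonneg Real.HolderConjugate.two_two
          (.of_forall fun x => abs_nonneg (f x)) (.of_forall fun x => abs_nonneg (g x))
          (by simpa using hf.norm) (by simpa using hg.norm)
        simpa only [Real.rpow_two, sq_abs, ← Real.sqrt_eq_rpow] using holder

lemma abs_integral_mul_le_of_sq_le (hf : AEStronglyMeasurable f μ)
    (hg : AEStronglyMeasurable g μ) (hu : Integrable u μ) (hv : Integrable v μ)
    (hfu : ∀ᵐ x ∂μ, f x ^ 2 ≤ u x) (hgv : ∀ᵐ x ∂μ, g x ^ 2 ≤ v x) :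
    |∫ x, f x * g x ∂μ| ≤ √(∫ x, u x ∂μ) * √(∫ x, v x ∂μ) := by
  have hf₂ := memLp_two_of_sq_le hf hu hfu
  have hg₂ := memLp_two_of_sq_le hg hv hgv
  refine (abs_integral_mul_le_sqrt_integral_sq hf₂ hg₂).trans ?_
  gcongr ?_ * ?_
  · exact Real.sqrt_le_sqrt (integral_mono_ae hf₂.integrable_sq hu hfu)
  · exact Real.sqrt_le_sqrt (integral_mono_ae hg₂.integrable_sq hv hgv)

lemma integral_mul_le_sum_range_two_integral {π : α → ℝ} {h : ℕ → α → ℝ}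
    (hπ : ∀ᵐ x ∂μ, π x ≤ 1) (h_nonneg : ∀ᵐ x ∂μ, 0 ≤ h 0 x) :
    ∫ x, π x * h 1 x ∂μ ≤
      ∑ a ∈ Finset.range 2, ∫ x, (π x ^ a * (1 - π x) ^ (1 - a)) * h a x ∂μ := by
  have control_nonneg : 0 ≤ ∫ x, (1 - π x) * h 0 x ∂μ := integral_nonneg_of_ae <| by
    filter_upwards [hπ, h_nonneg] with x hx hx' using mul_nonneg (sub_nonneg.2 hx) hx'
  simpa [Finset.sum_range_succ] using control_nonneg

end Integration

lemma sqrt_four_div_sq_mul_mul_sqrt_four_div_mul {δ : ℝ} (hδ : 0 < δ) (x y : ℝ) :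
    √(4 / δ ^ 2 * x) * √(4 / δ * y) = 4 * δ ^ (-(3 : ℝ) / 2) * √y * √x := by
  have rpow_eq : δ ^ (-(3 : ℝ) / 2) = (δ * √δ)⁻¹ := by
    rw [neg_div, Real.rpow_neg hδ.le, show (3 : ℝ) / 2 = 1 + 1 / 2 by norm_num,
      Real.rpow_add hδ, Real.rpow_one, ← Real.sqrt_eq_rpow]
  have sqrt_four : √(4 : ℝ) = 2 := by
    rw [Real.sqrt_eq_iff_mul_self_eq] <;> norm_num
  rw [Real.sqrt_mul (by positivity), Real.sqrt_mul (by positivity), Real.sqrt_div zero_le_four,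
    Real.sqrt_div zero_le_four, Real.sqrt_sq hδ.le, sqrt_four, rpow_eq]
  ring

/-- Here `Q₀` and `Q` stand for the treated-arm regressions `Q̄₀(1, ·)` and `Q̄(1, ·)`. -/
theorem ate_remainder_composite_bound_general {𝒲 : Type*} [MeasurableSpace 𝒲] {μ : Measure 𝒲}
    {G₀ G Q₀ Q : 𝒲 → ℝ} {δ dG dQ : ℝ} (hδ : 0 < δ)
    (hG₀m : AEMeasurable G₀ μ) (hGm : AEMeasurable G μ)
    (hQ₀m : AEMeasurable Q₀ μ) (hQm : AEMeasurable Q μ)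
    (hG₀ : ∀ᵐ w ∂μ, G₀ w ∈ Set.Icc δ 1) (hG : ∀ᵐ w ∂μ, G w ∈ Set.Ico δ 1)
    (hQ₀ : ∀ᵐ w ∂μ, Q₀ w ∈ Set.Icc 0 1) (hQ : ∀ᵐ w ∂μ, Q w ∈ Set.Ioo 0 1)
    (hIntG : Integrable (fun w => bernKL (G₀ w) (G w)) μ)
    (hIntQ : Integrable (fun w => G₀ w * bernKL (Q₀ w) (Q w)) μ)
    (hdG : ∫ w, bernKL (G₀ w) (G w) ∂μ ≤ dG)
    (hdQ : ∫ w, G₀ w * bernKL (Q₀ w) (Q w) ∂μ ≤ dQ) :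
    |∫ w, ((G w - G₀ w) / G w) * (Q w - Q₀ w) ∂μ| ≤
      4 * δ ^ (-(3 : ℝ) / 2) * √dQ * √dG := by
  have propensity_error : ∀ᵐ w ∂μ,
      ((G w - G₀ w) / G w) ^ 2 ≤ 4 / δ ^ 2 * bernKL (G₀ w) (G w) := by
    filter_upwards [hG₀, hG] with w hG₀w hGw
    exact sq_sub_div_self_le_mul_bernKL hδ ⟨hδ.le.trans hG₀w.1, hG₀w.2⟩ hGw
  have outcome_error : ∀ᵐ w ∂μ,
      (Q w - Q₀ w) ^ 2 ≤ 4 / δ * (G₀ w * bernKL (Q₀ w) (Q w)) := by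
    filter_upwards [hG₀, hQ₀, hQ] with w hG₀w hQ₀w hQw
    exact sq_sub_le_mul_weight_mul_bernKL hδ hG₀w.1 hQ₀w hQw
  have cauchy_schwarz := abs_integral_mul_le_of_sq_le
    ((hGm.sub hG₀m).div hGm).aestronglyMeasurable (hQm.sub hQ₀m).aestronglyMeasurable
    (hIntG.const_mul _) (hIntQ.const_mul _) propensity_error outcome_error
  rw [integral_const_mul, integral_const_mul,
    sqrt_four_div_sq_mul_mul_sqrt_four_div_mul hδ] at cauchy_schwarz
  exact cauchy_schwarz.trans (by gcongr)

/-- Composite bound (13) on the exact second-order remainder for the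
treatment-specific mean: with `G ≥ δ`, `G₀ ≥ δ`, and `d_G`, `d_Q` the
Kullback–Leibler loss-based dissimilarities of the propensity score and
outcome regression, `|R₂| ≤ 4 δ^{−3/2} d_Q^{1/2} d_G^{1/2}`. -/
theorem ate_remainder_composite_bound {𝒲 : Type*} [MeasurableSpace 𝒲]
    (μ₀ : Measure 𝒲) [IsProbabilityMeasure μ₀]
    (G₀ G : 𝒲 → ℝ) (Qbar₀ Qbar : ℕ → 𝒲 → ℝ) (δ : ℝ) (hδ : δ ∈ Set.Ioo (0 : ℝ) 1)
    (hG₀m : Measurable G₀) (hGm : Measurable G)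
    (hQbar₀m : ∀ a, Measurable (Qbar₀ a)) (hQbarm : ∀ a, Measurable (Qbar a))
    (hG₀ : ∀ w, G₀ w ∈ Set.Ioo (0 : ℝ) 1) (hG : ∀ w, G w ∈ Set.Ioo (0 : ℝ) 1)
    (hQbar₀ : ∀ a w, Qbar₀ a w ∈ Set.Ioo (0 : ℝ) 1)
    (hQbar : ∀ a w, Qbar a w ∈ Set.Ioo (0 : ℝ) 1)
    (hGδ : ∀ w, δ ≤ G w) (hG₀δ : ∀ w, δ ≤ G₀ w)
    (hIntG : Integrable (fun w => bernKL (G₀ w) (G w)) μ₀)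
    (hIntQ : ∀ a,
      Integrable (fun w => (G₀ w ^ a * (1 - G₀ w) ^ (1 - a)) *
        bernKL (Qbar₀ a w) (Qbar a w)) μ₀)
    (dG dQ : ℝ)
    (hdG : dG = ∫ w, bernKL (G₀ w) (G w) ∂μ₀)
    (hdQ : dQ = ∑ a ∈ Finset.range 2,
      ∫ w, (G₀ w ^ a * (1 - G₀ w) ^ (1 - a)) * bernKL (Qbar₀ a w) (Qbar a w) ∂μ₀) :
    |∫ w, ((G w - G₀ w) / G w) * (Qbar 1 w - Qbar₀ 1 w) ∂μ₀| ≤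
      4 * δ ^ (-(3 : ℝ) / 2) * Real.sqrt dQ * Real.sqrt dG := by
  have treated_le_dQ : ∫ w, G₀ w * bernKL (Qbar₀ 1 w) (Qbar 1 w) ∂μ₀ ≤ dQ :=
    hdQ ▸ integral_mul_le_sum_range_two_integral (h := fun a w => bernKL (Qbar₀ a w) (Qbar a w))
      (.of_forall fun w => (hG₀ w).2.le)
      (.of_forall fun w => bernKL_nonneg (Set.Ioo_subset_Icc_self (hQbar₀ 0 w)) (hQbar 0 w))
  exact ate_remainder_composite_bound_general hδ.1 hG₀m.aemeasurable hGm.aemeasurable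
    (hQbar₀m 1).aemeasurable (hQbarm 1).aemeasurable
    (.of_forall fun w => ⟨hG₀δ w, (hG₀ w).2.le⟩) (.of_forall fun w => ⟨hGδ w, (hG w).2⟩)
    (.of_forall fun w => Set.Ioo_subset_Icc_self (hQbar₀ 1 w)) (.of_forall (hQbar 1))
    hIntG (by simpa using hIntQ 1) hdG.ge treated_le_dQ
end

section
/- (Bound on the exact remainder by the Kullback–Leibler dissimilarity in the density example.) Let μ be a σ-finite measure on a measurable space Ω, and let p, p₀ : Ω → ℝ be nonnegative measurable probability densities with respect to μ (∫p dμ = ∫p₀ dμ = 1) such that p ≤ M and p₀ ≤ M μ-almost everywhere for some M < ∞, and p > 0 μ-almost everywhere on {p₀ > 0}. Then ∫ (p − p₀)² dμ ≤ 4M ∫ p₀ log(p₀/p) dμ. -/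
open MeasureTheory

/-!
Write `p - q = (√p - √q) (√p + √q)`. The second factor is at most `2 √M`, so the squared `L²`
distance is at most `4 M` times the squared Hellinger distance. The latter is bounded by the
Kullback–Leibler divergence because `log √x ≥ 1 - 1 / √x`, applied to `x = q / p`, gives
`(√p - √q) ^ 2 ≤ q log (q / p) + (p - q)`, and the correction `p - q` integrates to zero when both
densities have the same mass.
-/

section Pointwise

open InformationTheory

theorem sq_sqrt_sub_one_le_klFun {x : ℝ} (hx : 0 ≤ x) : (√x - 1) ^ 2 ≤ klFun x := by
  rcases hx.eq_or_lt with rfl | hx_pos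
  · simp [klFun_zero]
  have sub_sqrt_le : x - √x ≤ x * (Real.log x / 2) :=
    calc x - √x = x * (1 - (√x)⁻¹) := by rw [mul_sub, mul_one, ← div_eq_mul_inv, Real.div_sqrt]
      _ ≤ x * Real.log √x := by
        gcongr
        exact Real.one_sub_inv_le_log_of_pos (Real.sqrt_pos.2 hx_pos)
      _ = x * (Real.log x / 2) := by rw [Real.log_sqrt hx]
  rw [klFun_apply, sub_sq, Real.sq_sqrt hx]
  linarith

theorem sq_sqrt_sub_sqrt_le_mul_log_div_add {p q : ℝ} (hp : 0 ≤ p) (hq : 0 ≤ q)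
    (hpos : 0 < q → 0 < p) : (√p - √q) ^ 2 ≤ q * Real.log (q / p) + (p - q) := by
  rcases hp.eq_or_lt with rfl | hp_pos
  · obtain rfl : q = 0 := le_antisymm (not_lt.1 fun hq_pos ↦ (hpos hq_pos).false) hq
    simp
  calc (√p - √q) ^ 2 = p * (√(q / p) - 1) ^ 2 := by
        nth_rw 2 [← Real.sq_sqrt hp]
        rw [Real.sqrt_div hq, ← mul_pow, mul_sub, mul_div_cancel₀ _ (Real.sqrt_pos.2 hp_pos).ne',
          mul_one, sub_sq_comm]
    _ ≤ p * klFun (q / p) := by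
        gcongr
        exact sq_sqrt_sub_one_le_klFun (div_nonneg hq hp)
    _ = q * Real.log (q / p) + (p - q) := by
        rw [klFun_apply]
        field_simp
        ring

theorem sq_sub_le_mul_sq_sqrt_sub_sqrt {p q M : ℝ} (hp : 0 ≤ p) (hq : 0 ≤ q)
    (hpM : p ≤ M) (hqM : q ≤ M) : (p - q) ^ 2 ≤ 4 * M * (√p - √q) ^ 2 := by
  have sq_sqrt_add_sqrt_le : (√p + √q) ^ 2 ≤ 4 * M :=
    calc (√p + √q) ^ 2 ≤ 2 * (√p ^ 2 + √q ^ 2) := add_sq_le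
      _ = 2 * (p + q) := by rw [Real.sq_sqrt hp, Real.sq_sqrt hq]
      _ ≤ 4 * M := by linarith
  calc (p - q) ^ 2 = (√p ^ 2 - √q ^ 2) ^ 2 := by rw [Real.sq_sqrt hp, Real.sq_sqrt hq]
    _ = (√p + √q) ^ 2 * (√p - √q) ^ 2 := by ring
    _ ≤ 4 * M * (√p - √q) ^ 2 := by gcongr

end Pointwise

section Hellinger

variable {Ω : Type*} [MeasurableSpace Ω] {μ : Measure Ω} {p q : Ω → ℝ} {M : ℝ}

/-- The squared Hellinger distance between the measures with densities `p` and `q` with respect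
to `μ`, without the factor `1 / 2` that some authors include. It is meant for nonnegative
integrable `p` and `q`, of any total mass. -/
noncomputable def sqHellinger (μ : Measure Ω) (p q : Ω → ℝ) : ℝ :=
  ∫ x, (√(p x) - √(q x)) ^ 2 ∂μ

theorem memLp_two_sqrt (hpI : Integrable p μ) : MemLp (fun x ↦ √(p x)) 2 μ := by
  rw [memLp_two_iff_integrable_sq
    (Real.continuous_sqrt.comp_aestronglyMeasurable hpI.aestronglyMeasurable)]
  simpa only [Real.sq_sqrt'] using hpI.pos_part

theorem integrable_sq_sqrt_sub_sqrt (hpI : Integrable p μ) (hqI : Integrable q μ) :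
    Integrable (fun x ↦ (√(p x) - √(q x)) ^ 2) μ :=
  ((memLp_two_sqrt hpI).sub (memLp_two_sqrt hqI)).integrable_sq

theorem sqHellinger_le_integral_mul_log_div_add (hp : 0 ≤ᵐ[μ] p) (hq : 0 ≤ᵐ[μ] q)
    (hpI : Integrable p μ) (hqI : Integrable q μ) (hpos : ∀ᵐ x ∂μ, 0 < q x → 0 < p x)
    (hklI : Integrable (fun x ↦ q x * Real.log (q x / p x)) μ) :
    sqHellinger μ p q ≤
      ∫ x, q x * Real.log (q x / p x) ∂μ + (∫ x, p x ∂μ - ∫ x, q x ∂μ) := by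
  have hsub : Integrable (fun x ↦ p x - q x) μ := hpI.sub hqI
  rw [← integral_sub hpI hqI, ← integral_add hklI hsub]
  refine integral_mono_ae (integrable_sq_sqrt_sub_sqrt hpI hqI) (hklI.add hsub) ?_
  filter_upwards [hp, hq, hpos] with x using sq_sqrt_sub_sqrt_le_mul_log_div_add

theorem integral_sq_sub_le_mul_sqHellinger (hp : 0 ≤ᵐ[μ] p) (hq : 0 ≤ᵐ[μ] q)
    (hpI : Integrable p μ) (hqI : Integrable q μ)
    (hpM : ∀ᵐ x ∂μ, p x ≤ M) (hqM : ∀ᵐ x ∂μ, q x ≤ M) :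
    ∫ x, (p x - q x) ^ 2 ∂μ ≤ 4 * M * sqHellinger μ p q := by
  rw [sqHellinger, ← integral_const_mul]
  refine integral_mono_of_nonneg (ae_of_all _ fun x ↦ sq_nonneg _)
    ((integrable_sq_sqrt_sub_sqrt hpI hqI).const_mul _) ?_
  filter_upwards [hp, hq, hpM, hqM] with x using sq_sub_le_mul_sq_sqrt_sub_sqrt

theorem squared_density_remainder_le_kl_general (hp : 0 ≤ᵐ[μ] p) (hq : 0 ≤ᵐ[μ] q)
    (hpI : Integrable p μ) (hqI : Integrable q μ)
    (hpM : ∀ᵐ x ∂μ, p x ≤ M) (hqM : ∀ᵐ x ∂μ, q x ≤ M)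
    (hpos : ∀ᵐ x ∂μ, 0 < q x → 0 < p x)
    (hklI : Integrable (fun x ↦ q x * Real.log (q x / p x)) μ) :
    ∫ x, (p x - q x) ^ 2 ∂μ ≤
      4 * M * (∫ x, q x * Real.log (q x / p x) ∂μ + (∫ x, p x ∂μ - ∫ x, q x ∂μ)) := by
  rcases eq_zero_or_neZero μ with rfl | _
  · simp
  have hM : 0 ≤ M := by
    obtain ⟨x, hx, hxM⟩ := (hp.and hpM).exists
    exact hx.trans hxM
  calc ∫ x, (p x - q x) ^ 2 ∂μ ≤ 4 * M * sqHellinger μ p q :=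
        integral_sq_sub_le_mul_sqHellinger hp hq hpI hqI hpM hqM
    _ ≤ _ := by
        gcongr
        exact sqHellinger_le_integral_mul_log_div_add hp hq hpI hqI hpos hklI

end Hellinger

/-- Bound on the exact remainder by the Kullback–Leibler dissimilarity in the
integral-of-squared-density example: for densities `p, p₀ ≤ M` (μ-a.e.) with
`p > 0` a.e. on `{p₀ > 0}`, one has `∫ (p − p₀)² dμ ≤ 4M ∫ p₀ log(p₀/p) dμ`. -/
theorem squared_density_remainder_le_kl {Ω : Type*} [MeasurableSpace Ω]
    (μ : Measure Ω) [SigmaFinite μ] (p p₀ : Ω → ℝ) (M : ℝ)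
    (hpm : Measurable p) (hp₀m : Measurable p₀)
    (hp0 : ∀ x, 0 ≤ p x) (hp₀0 : ∀ x, 0 ≤ p₀ x)
    (hpI : Integrable p μ) (hp₀I : Integrable p₀ μ)
    (hp1 : ∫ x, p x ∂μ = 1) (hp₀1 : ∫ x, p₀ x ∂μ = 1)
    (hpM : ∀ᵐ x ∂μ, p x ≤ M) (hp₀M : ∀ᵐ x ∂μ, p₀ x ≤ M)
    (hpos : ∀ᵐ x ∂μ, 0 < p₀ x → 0 < p x)
    (hklI : Integrable (fun x => p₀ x * Real.log (p₀ x / p x)) μ) :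
    ∫ x, (p x - p₀ x) ^ 2 ∂μ ≤ 4 * M * ∫ x, p₀ x * Real.log (p₀ x / p x) ∂μ := by
  simpa only [hp1, hp₀1, sub_self, add_zero] using squared_density_remainder_le_kl_general
    (ae_of_all μ hp0) (ae_of_all μ hp₀0) hpI hp₀I hpM hp₀M hpos hklI
end
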